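/- Let h = a·r₁ + b·r₂ where r₁ is the rank function of U^{123}_{2,3} and r₂ that of U^{124}_{1,3} on N_4, with a, b ≥ 0. Then h is entropic if and only if a = log k for some positive integer k. -/

import Mathlib

open Finset

/-- Probability that the discrete random variable `Y` (on finite sample space `Ω`
with pmf `p`) takes the value `s`. -/
noncomputable def pr {Ω : Type} [Fintype Ω] {S : Type} [DecidableEq S]
    (p : Ω → ℝ) (Y : Ω → S) (s : S) : ℝ := ∑ ω, if Y ω = s then p ω else 0

/-- Shannon entropy (base 2) of the discrete random variable `Y`. -/
noncomputable def ent {Ω : Type} [Fintype Ω] {S : Type} [DecidableEq S]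
    (p : Ω → ℝ) (Y : Ω → S) : ℝ :=
  - ∑ s ∈ Finset.univ.image Y, pr p Y s * Real.logb 2 (pr p Y s)

/-- `h : 2^{N_n} → ℝ` is entropic: it is the entropy function of some random
vector `(X_1, …, X_n)` on finite alphabets. -/
def IsEntropic (n : ℕ) (h : Finset (Fin n) → ℝ) : Prop :=
  ∃ (m : Fin n → ℕ) (p : (∀ i, Fin (m i)) → ℝ),
    (∀ x, 0 ≤ p x) ∧ (∑ x, p x) = 1 ∧
    ∀ A : Finset (Fin n), h A = ent p (fun x (i : A) => x i.1)

/-- Rank function of the matroid U^{B}_{k,|B|} on N₄ = {0,1,2,3}: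
A ↦ min(k, |A ∩ B|); elements outside B are loops. -/
noncomputable def rkU (k : ℕ) (B : Finset (Fin 4)) (A : Finset (Fin 4)) : ℝ :=
  min (k : ℝ) ((A ∩ B).card : ℝ)


section Helpers

variable {Ω : Type} [Fintype Ω] {S : Type} [DecidableEq S] {T : Type} [DecidableEq T]
  {U : Type} [DecidableEq U] {V : Type} [DecidableEq V]

theorem ent_formula (p : Ω → ℝ) (Y : Ω → S) :
    ent p Y = - ∑ ω, p ω * Real.logb 2 (pr p Y (Y ω)) := by
  unfold ent
  congr 1
  have h1 : ∀ s, pr p Y s * Real.logb 2 (pr p Y s)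
      = ∑ ω, if Y ω = s then p ω * Real.logb 2 (pr p Y s) else 0 := by
    intro s
    conv_lhs => rw [pr]
    rw [Finset.sum_mul]
    exact Finset.sum_congr rfl (fun ω _ => by split_ifs <;> simp [pr])
  rw [Finset.sum_congr rfl (fun s _ => h1 s), Finset.sum_comm]
  refine Finset.sum_congr rfl (fun ω _ => ?_)
  rw [Finset.sum_ite_eq]
  simp

theorem pr_nonneg' (p : Ω → ℝ) (hp : ∀ x, 0 ≤ p x) (Y : Ω → S) (s : S) : 0 ≤ pr p Y s :=
  Finset.sum_nonneg (fun ω _ => by split_ifs <;> simp [hp])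

theorem pr_pos' (p : Ω → ℝ) (hp : ∀ x, 0 ≤ p x) (Y : Ω → S) (ω : Ω) (h : 0 < p ω) :
    0 < pr p Y (Y ω) := by
  refine lt_of_lt_of_le h ?_
  have := Finset.single_le_sum (f := fun ω' => if Y ω' = Y ω then p ω' else 0)
    (fun i _ => by split_ifs <;> simp [hp]) (Finset.mem_univ ω)
  simpa [pr] using this

theorem pr_ker (p : Ω → ℝ) (Y : Ω → S) (Z : Ω → T) (ω : Ω)
    (h : ∀ ω', Y ω' = Y ω ↔ Z ω' = Z ω) : pr p Y (Y ω) = pr p Z (Z ω) :=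
  Finset.sum_congr rfl (fun ω' _ => by simp only [h ω'])

theorem pr_exists (p : Ω → ℝ) (hp : ∀ x, 0 ≤ p x) (Y : Ω → S) (s : S) (h : 0 < pr p Y s) :
    ∃ ω, 0 < p ω ∧ Y ω = s := by
  by_contra! hc
  have : pr p Y s = 0 := by
    refine Finset.sum_eq_zero (fun ω _ => ?_)
    split_ifs with h1
    · by_contra h2
      exact hc ω (lt_of_le_of_ne (hp ω) (Ne.symm h2)) h1
    · rfl
  linarith

theorem pr_total [Fintype S] (p : Ω → ℝ) (Y : Ω → S) : ∑ s, pr p Y s = ∑ ω, p ω := by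
  unfold pr
  rw [Finset.sum_comm]
  simp

/-- The key moment bound for the Gibbs inequality. -/
theorem gibbs_bound (p : Ω → ℝ) (hp : ∀ x, 0 ≤ p x) (h1 : ∑ x, p x = 1)
    (A : Ω → S) (B : Ω → T) (C : Ω → U) (D : Ω → V)
    (hAC : ∀ ω ω', A ω = A ω' → C ω = C ω') (hBC : ∀ ω ω', B ω = B ω' → C ω = C ω')
    (hD : ∀ ω ω', D ω = D ω' ↔ A ω = A ω' ∧ B ω = B ω') :
    ∑ ω, p ω * (pr p A (A ω) * pr p B (B ω) / (pr p D (D ω) * pr p C (C ω))) ≤ 1 := by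
  have e1 : ∀ ω, p ω * (pr p A (A ω) * pr p B (B ω) / (pr p D (D ω) * pr p C (C ω)))
      = ∑ x, ∑ y, p x * p y * (if A x = A ω ∧ B y = B ω then
          p ω / (pr p D (D ω) * pr p C (C ω)) else 0) := by
    intro ω
    rw [mul_div_assoc', mul_comm (p ω), mul_div_assoc]
    conv_lhs => rw [pr, pr, Finset.sum_mul_sum]
    rw [Finset.sum_mul]
    refine Finset.sum_congr rfl (fun x _ => ?_)
    rw [Finset.sum_mul]
    refine Finset.sum_congr rfl (fun y _ => ?_)
    by_cases hx : A x = A ω <;> by_cases hy : B y = B ω <;> simp [hx, hy]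
  have e2 : ∀ x y, ∑ ω, (if A x = A ω ∧ B y = B ω then
          p ω / (pr p D (D ω) * pr p C (C ω)) else 0)
          ≤ if C y = C x then (pr p C (C x))⁻¹ else 0 := by
    intro x y
    by_cases hex : ∃ ω, A x = A ω ∧ B y = B ω
    · obtain ⟨o, ho1, ho2⟩ := hex
      have hc : C y = C x := by rw [hAC _ _ ho1, hBC _ _ ho2]
      rw [if_pos hc]
      have : ∀ ω, (if A x = A ω ∧ B y = B ω then
          p ω / (pr p D (D ω) * pr p C (C ω)) else 0)
          = (if D ω = D o then p ω else 0) * ((pr p D (D o))⁻¹ * (pr p C (C x))⁻¹) := by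
        intro ω
        by_cases hω : D ω = D o
        · have h2 := (hD _ _).1 hω
          rw [if_pos hω, if_pos ⟨by rw [ho1, h2.1], by rw [ho2, h2.2]⟩, hω,
            hAC _ _ h2.1, ← hAC _ _ ho1, div_eq_mul_inv, mul_inv]
        · rw [if_neg hω, if_neg, zero_mul]
          rintro ⟨h3, h4⟩
          exact hω ((hD _ _).2 ⟨by rw [← h3, ho1], by rw [← h4, ho2]⟩)
      rw [Finset.sum_congr rfl (fun ω _ => this ω), ← Finset.sum_mul, ← mul_assoc]
      change pr p D (D o) * _ * _ ≤ _
      have hn := inv_nonneg.2 (pr_nonneg' p hp C (C x))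
      by_cases hz : pr p D (D o) = 0
      · rw [hz]; simpa using hn
      · rw [mul_inv_cancel₀ hz, one_mul]
    · rw [Finset.sum_eq_zero]
      · split_ifs
        · exact inv_nonneg.2 (pr_nonneg' p hp C (C x))
        · exact le_rfl
      · intro ω _
        rw [if_neg]
        exact fun h => hex ⟨ω, h⟩
  rw [Finset.sum_congr rfl (fun ω _ => e1 ω), Finset.sum_comm]
  calc _ = ∑ x, ∑ y, p x * p y * ∑ ω, (if A x = A ω ∧ B y = B ω then
          p ω / (pr p D (D ω) * pr p C (C ω)) else 0) := by
        refine Finset.sum_congr rfl (fun x _ => ?_)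
        rw [Finset.sum_comm]
        refine Finset.sum_congr rfl (fun y _ => ?_)
        rw [Finset.mul_sum]
    _ ≤ ∑ x, ∑ y, p x * p y * (if C y = C x then (pr p C (C x))⁻¹ else 0) :=
        Finset.sum_le_sum (fun x _ => Finset.sum_le_sum (fun y _ =>
          mul_le_mul_of_nonneg_left (e2 x y) (mul_nonneg (hp x) (hp y))))
    _ = ∑ x, p x * (pr p C (C x) * (pr p C (C x))⁻¹) := by
        refine Finset.sum_congr rfl (fun x _ => ?_)
        conv_rhs => rw [pr]
        rw [Finset.sum_mul, Finset.mul_sum]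
        refine Finset.sum_congr rfl (fun y _ => ?_)
        split_ifs
        · rw [← pr]; ring
        · ring
    _ ≤ ∑ x, p x := by
        refine Finset.sum_le_sum (fun x _ => ?_)
        by_cases hz : pr p C (C x) = 0
        · rw [hz]; simpa using hp x
        · rw [mul_inv_cancel₀ hz, mul_one]
    _ = 1 := h1

/-- Equality case of (conditional) submodularity. -/
theorem gibbs_eq (p : Ω → ℝ) (hp : ∀ x, 0 ≤ p x) (h1 : ∑ x, p x = 1)
    (A : Ω → S) (B : Ω → T) (C : Ω → U) (D : Ω → V)
    (hAC : ∀ ω ω', A ω = A ω' → C ω = C ω') (hBC : ∀ ω ω', B ω = B ω' → C ω = C ω')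
    (hD : ∀ ω ω', D ω = D ω' ↔ A ω = A ω' ∧ B ω = B ω')
    (he : ent p A + ent p B = ent p D + ent p C) (ω : Ω) (hω : 0 < p ω) :
    pr p A (A ω) * pr p B (B ω) = pr p D (D ω) * pr p C (C ω) := by
  have hb := gibbs_bound p hp h1 A B C D hAC hBC hD
  set r : Ω → ℝ := fun ω => pr p A (A ω) * pr p B (B ω) / (pr p D (D ω) * pr p C (C ω)) with hr
  have hrpos : ∀ ω, 0 < p ω → 0 < r ω := fun ω h => by
    have := pr_pos' p hp A ω h
    have := pr_pos' p hp B ω h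
    have := pr_pos' p hp C ω h
    have := pr_pos' p hp D ω h
    simp only [hr]; positivity
  have hlog : ∑ ω, p ω * Real.log (r ω) = 0 := by
    simp only [ent_formula] at he
    have h2 : Real.log 2 ≠ 0 := by positivity
    have : ∑ ω, p ω * Real.log (r ω) = Real.log 2 * (
        (∑ ω, p ω * Real.logb 2 (pr p A (A ω))) + (∑ ω, p ω * Real.logb 2 (pr p B (B ω)))
        - (∑ ω, p ω * Real.logb 2 (pr p D (D ω))) - (∑ ω, p ω * Real.logb 2 (pr p C (C ω)))) := by
      rw [← Finset.sum_add_distrib, ← Finset.sum_sub_distrib, ← Finset.sum_sub_distrib,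
        Finset.mul_sum]
      refine Finset.sum_congr rfl (fun ω _ => ?_)
      rcases (hp ω).eq_or_lt with h | h
      · simp [← h]
      · have hA := (pr_pos' p hp A ω h).ne'
        have hB := (pr_pos' p hp B ω h).ne'
        have hC := (pr_pos' p hp C ω h).ne'
        have hD := (pr_pos' p hp D ω h).ne'
        simp only [hr]
        rw [Real.log_div (mul_ne_zero hA hB) (mul_ne_zero hD hC), Real.log_mul hA hB,
          Real.log_mul hD hC]
        simp only [Real.logb]
        field_simp
        ring
    rw [this]
    rw [show ∀ a b c d : ℝ, a + b - c - d = (-c + -d) - (-a + -b) from fun a b c d => by ring,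
      ← he]
    ring
  have hnn : ∀ ω ∈ Finset.univ, 0 ≤ p ω * (r ω - 1 - Real.log (r ω)) := fun ω _ => by
    rcases (hp ω).eq_or_lt with h | h
    · simp [← h]
    · have := Real.log_le_sub_one_of_pos (hrpos ω h)
      exact mul_nonneg h.le (by linarith)
  have hs : ∑ ω, p ω * (r ω - 1 - Real.log (r ω)) = 0 := by
    apply le_antisymm _ (Finset.sum_nonneg hnn)
    have : ∑ ω, p ω * (r ω - 1 - Real.log (r ω))
      = ∑ ω, p ω * r ω - ∑ ω, p ω - ∑ ω, p ω * Real.log (r ω) := by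
      rw [← Finset.sum_sub_distrib, ← Finset.sum_sub_distrib]
      exact Finset.sum_congr rfl (fun ω _ => by ring)
    rw [this, hlog, h1]
    linarith
  have h3 := (Finset.sum_eq_zero_iff_of_nonneg hnn).1 hs ω (Finset.mem_univ _)
  have h4 : r ω - 1 - Real.log (r ω) = 0 := by
    rcases mul_eq_zero.1 h3 with h | h
    · linarith
    · exact h
  have h5 : r ω = 1 := by
    by_contra h
    have := Real.log_lt_sub_one_of_pos (hrpos ω hω) h
    linarith
  have hC := (pr_pos' p hp C ω hω)
  have hD := (pr_pos' p hp D ω hω)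
  simp only [hr] at h5
  rwa [div_eq_one_iff_eq (mul_pos hD hC).ne'] at h5

/-- `D` refines `A` with the same entropy: same fibre probabilities. -/
theorem same_ent (p : Ω → ℝ) (hp : ∀ x, 0 ≤ p x) (h1 : ∑ x, p x = 1)
    (A : Ω → S) (D : Ω → V) (hDA : ∀ ω ω', D ω = D ω' → A ω = A ω')
    (he : ent p D = ent p A) (ω : Ω) (hω : 0 < p ω) :
    pr p D (D ω) = pr p A (A ω) := by
  have := gibbs_eq p hp h1 D D A D hDA hDA (by simp) (by rw [he]) ω hω
  exact mul_left_cancel₀ (pr_pos' p hp D ω hω).ne' this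

theorem det_of_pr_eq (p : Ω → ℝ) (hp : ∀ x, 0 ≤ p x)
    (A : Ω → S) (D : Ω → V) (hDA : ∀ ω ω', D ω = D ω' → A ω = A ω') (ω ω' : Ω)
    (he : pr p D (D ω) = pr p A (A ω)) (hω : 0 < p ω') (h : A ω' = A ω) : D ω' = D ω := by
  by_contra hn
  have : pr p D (D ω) < pr p A (A ω) := by
    refine Finset.sum_lt_sum (fun x _ => ?_) ⟨ω', Finset.mem_univ _, ?_⟩
    · by_cases hx : D x = D ω
      · rw [if_pos hx, if_pos (hDA _ _ hx)]
      · rw [if_neg hx]; split_ifs <;> simp [hp]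
    · rw [if_neg hn, if_pos h]; exact hω
  linarith

/-- Independence on the support implies that every pair of likely values is compatible. -/
theorem indep_compat [Fintype T] (p : Ω → ℝ) (hp : ∀ x, 0 ≤ p x) (h1 : ∑ x, p x = 1)
    (A : Ω → S) (B : Ω → T) (D : Ω → V)
    (hD : ∀ ω ω', D ω = D ω' ↔ A ω = A ω' ∧ B ω = B ω')
    (hi : ∀ ω, 0 < p ω → pr p D (D ω) = pr p A (A ω) * pr p B (B ω))
    (x y : Ω) (hx : 0 < p x) (hy : 0 < p y) : ∃ ω, 0 < p ω ∧ A ω = A x ∧ B ω = B y := by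
  let P : Ω → S × T := fun ω => (A ω, B ω)
  have hle : ∀ t ∈ Finset.univ, pr p P (A x, t) ≤ pr p A (A x) * pr p B t := by
    intro t _
    rcases (pr_nonneg' p hp P (A x, t)).eq_or_lt with h | h
    · rw [← h]; exact mul_nonneg (pr_nonneg' p hp _ _) (pr_nonneg' p hp _ _)
    · obtain ⟨ω, h2, h3⟩ := pr_exists p hp P _ h
      have ha : A ω = A x := congrArg Prod.fst h3
      have hb : B ω = t := congrArg Prod.snd h3
      rw [← h3, pr_ker p P D ω (fun ω' => by simp [P, hD]), hi ω h2, ha, hb]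
  have hsum : ∑ t, pr p P (A x, t) = ∑ t, pr p A (A x) * pr p B t := by
    rw [← Finset.mul_sum, pr_total, h1, mul_one]
    unfold pr
    rw [Finset.sum_comm]
    refine Finset.sum_congr rfl (fun ω _ => ?_)
    by_cases h : A ω = A x <;> simp [P, h]
  have := (Finset.sum_eq_sum_iff_of_le hle).1 hsum (B y) (Finset.mem_univ _)
  have hpos : 0 < pr p P (A x, B y) := by
    rw [this]; exact mul_pos (pr_pos' p hp A x hx) (pr_pos' p hp B y hy)
  obtain ⟨ω, h2, h3⟩ := pr_exists p hp P _ hpos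
  exact ⟨ω, h2, congrArg Prod.fst h3, congrArg Prod.snd h3⟩

theorem uniform_ent [Fintype T] (p : Ω → ℝ) (hp : ∀ x, 0 ≤ p x) (h1 : ∑ x, p x = 1)
    (B : Ω → T) (G : ℝ) (hG : ∀ ω, 0 < p ω → pr p B (B ω) = G) :
    ∃ k : ℕ, 0 < k ∧ ent p B = Real.logb 2 k := by
  let s : Finset T := Finset.univ.filter (fun t => pr p B t ≠ 0)
  have hs : ∑ t ∈ s, pr p B t = 1 := by
    rw [Finset.sum_filter_ne_zero, pr_total, h1]
  have hs2 : ∑ t ∈ s, pr p B t = s.card * G := by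
    rw [Finset.sum_congr rfl (g := fun _ => G), Finset.sum_const, nsmul_eq_mul]
    intro t ht
    have ht' : pr p B t ≠ 0 := (Finset.mem_filter.1 ht).2
    obtain ⟨ω, h2, h3⟩ := pr_exists p hp B t (lt_of_le_of_ne (pr_nonneg' p hp _ _) ht'.symm)
    rw [← h3, hG ω h2]
  rw [hs] at hs2
  have hc : (s.card : ℝ) ≠ 0 := fun h => by rw [h] at hs2; simp at hs2
  refine ⟨s.card, Nat.pos_of_ne_zero (by exact_mod_cast hc), ?_⟩
  have hGv : G = (s.card : ℝ)⁻¹ := by field_simp; linarith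
  rw [ent_formula]
  have : ∀ ω, p ω * Real.logb 2 (pr p B (B ω)) = p ω * Real.logb 2 G := by
    intro ω
    rcases (hp ω).eq_or_lt with h | h
    · simp [← h]
    · rw [hG ω h]
  rw [Finset.sum_congr rfl (fun ω _ => this ω), ← Finset.sum_mul, h1, hGv, Real.logb_inv]
  ring

theorem push_sum [Fintype S] (q : Ω → ℝ) (F : Ω → S) (g : S → ℝ) :
    ∑ x, pr q F x * g x = ∑ ω, q ω * g (F ω) := by
  unfold pr
  simp only [Finset.sum_mul]
  rw [Finset.sum_comm]
  refine Finset.sum_congr rfl (fun ω _ => ?_)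
  simp [ite_mul]

theorem push_pr [Fintype S] (q : Ω → ℝ) (F : Ω → S) (Y : S → T) (t : T) :
    pr (pr q F) Y t = pr q (fun ω => Y (F ω)) t := by
  have := push_sum q F (fun x => if Y x = t then 1 else 0)
  simpa [pr] using this

theorem push_ent [Fintype S] (q : Ω → ℝ) (F : Ω → S) (Y : S → T) :
    ent (pr q F) Y = ent q (fun ω => Y (F ω)) := by
  rw [ent_formula, ent_formula, push_sum q F (fun x => Real.logb 2 (pr (pr q F) Y (Y x)))]
  simp only [push_pr]

theorem entropic_of [Fintype T] (n : ℕ) (h : Finset (Fin n) → ℝ) (q : Ω → ℝ)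
    (hq : ∀ x, 0 ≤ q x) (h1 : ∑ x, q x = 1) (X : Fin n → Ω → T)
    (hX : ∀ A : Finset (Fin n), h A =
      - ∑ ω, q ω * Real.logb 2 (∑ ω', if ∀ i ∈ A, X i ω' = X i ω then q ω' else 0)) :
    IsEntropic n h := by
  let e := Fintype.equivFin T
  refine ⟨fun _ => Fintype.card T, pr q (fun ω i => e (X i ω)), pr_nonneg' q hq _, ?_, ?_⟩
  · rw [pr_total, h1]
  · intro A
    rw [push_ent, ent_formula, hX]
    congr 1
    refine Finset.sum_congr rfl (fun ω _ => ?_)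
    congr 2
    refine Finset.sum_congr rfl (fun ω' _ => ?_)
    congr 1
    simp [funext_iff]

theorem exists_ent (b : ℝ) (hb : 0 ≤ b) : ∃ (N : ℕ) (q : Fin N → ℝ),
    (∀ z, 0 ≤ q z) ∧ ∑ z, q z = 1 ∧ b = - ∑ z, q z * Real.logb 2 (q z) := by
  obtain ⟨M, hM⟩ := exists_nat_ge ((2:ℝ) ^ b)
  let f : ℝ → Fin (M+1) → ℝ := fun t z => (1 - t) * (if z = 0 then 1 else 0) + t * (M + 1 : ℝ)⁻¹
  let E : ℝ → ℝ := fun t => - ∑ z, f t z * Real.logb 2 (f t z)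
  have hE : ∀ t, E t = ∑ z, Real.negMulLog (f t z) / Real.log 2 := fun t => by
    simp only [E, Real.negMulLog, Real.logb, ← Finset.sum_neg_distrib]
    exact Finset.sum_congr rfl (fun z _ => by ring)
  have hcont : Continuous E := by
    have : E = fun t => ∑ z, Real.negMulLog (f t z) / Real.log 2 := funext hE
    rw [this]
    refine continuous_finsetSum _ (fun z _ => ?_)
    refine Continuous.div_const (Real.continuous_negMulLog.comp ?_) _
    fun_prop
  have hM1 : (M + 1 : ℝ) ≠ 0 := by positivity
  have h0 : E 0 = 0 := by
    simp [E, f]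
  have hE1 : b ≤ E 1 := by
    have : E 1 = Real.logb 2 (M + 1) := by
      simp [E, f, Real.logb_inv]
      field_simp
    rw [this, Real.le_logb_iff_rpow_le (by norm_num) (by positivity)]
    linarith
  obtain ⟨t, ht, hbt⟩ := intermediate_value_Icc (zero_le_one) hcont.continuousOn
    (show b ∈ Set.Icc (E 0) (E 1) from ⟨by rw [h0]; exact hb, hE1⟩)
  refine ⟨M + 1, f t, fun z => ?_, ?_, hbt.symm⟩
  · have := ht.1
    have := ht.2
    have h3 : 0 ≤ (1 - t) := by linarith
    simp only [f]
    split_ifs <;> positivity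
  · simp only [f, Finset.sum_add_distrib, ← Finset.mul_sum]
    simp
    field_simp
    ring

end Helpers

theorem face_forward (a b : ℝ) 
    (h : IsEntropic 4
      (fun A => a * rkU 2 ({0,1,2} : Finset (Fin 4)) A +
                b * rkU 1 ({0,1,3} : Finset (Fin 4)) A)) :
    ∃ k : ℕ, 0 < k ∧ a = Real.logb 2 k := by
  obtain ⟨m, p, hp, h1, hA⟩ := h
  let Y : (A : Finset (Fin 4)) → (∀ i, Fin (m i)) → (∀ i : A, Fin (m i.1)) :=
    fun A x i => x i.1
  have hY : ∀ (A : Finset (Fin 4)) x x', Y A x = Y A x' ↔ ∀ i ∈ A, x i = x' i := by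
    intro A x x'
    simp [Y, funext_iff]
  have hr : ∀ A, ent p (Y A) = a * rkU 2 ({0,1,2} : Finset (Fin 4)) A +
                b * rkU 1 ({0,1,3} : Finset (Fin 4)) A := fun A => (hA A).symm
  have c0 : ent p (Y ∅) = 0 := by rw [hr]; simp [rkU]
  have cc : ∀ (A : Finset (Fin 4)) (i j : ℕ), min 2 (A ∩ {0,1,2}).card = i →
      min 1 (A ∩ {0,1,3}).card = j → ent p (Y A) = a * i + b * j := by
    intro A i j hi hj
    rw [hr, ← hi, ← hj]
    simp [rkU]
  have e0 := cc {0} 1 1 (by decide) (by decide)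
  have e1 := cc {1} 1 1 (by decide) (by decide)
  have e2 := cc {2} 1 0 (by decide) (by decide)
  have e3 := cc {3} 0 1 (by decide) (by decide)
  have e03 := cc {0,3} 1 1 (by decide) (by decide)
  have e13 := cc {1,3} 1 1 (by decide) (by decide)
  have e02 := cc {0,2} 2 1 (by decide) (by decide)
  have e12 := cc {1,2} 2 1 (by decide) (by decide)
  have e013 := cc {0,1,3} 2 1 (by decide) (by decide)
  have eU := cc {0,1,2,3} 2 1 (by decide) (by decide)
  have sub : ∀ A B : Finset (Fin 4), A ⊆ B → ∀ x x', Y B x = Y B x' → Y A x = Y A x' := by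
    intro A B hAB x x' hx
    rw [hY] at hx ⊢
    exact fun i hi => hx i (hAB hi)
  have un : ∀ A B D : Finset (Fin 4), A ∪ B = D →
      ∀ x x', Y D x = Y D x' ↔ Y A x = Y A x' ∧ Y B x = Y B x' := by
    rintro A B D rfl x x'
    simp only [hY, Finset.mem_union]
    exact ⟨fun h => ⟨fun i hi => h i (Or.inl hi), fun i hi => h i (Or.inr hi)⟩,
      fun h i hi => hi.elim (h.1 i) (h.2 i)⟩
  have kE : ∀ x, pr p (Y ∅) (Y ∅ x) = 1 := by
    intro x
    rw [← h1]
    refine Finset.sum_congr rfl (fun y _ => ?_)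
    rw [if_pos]
    rw [hY]; simp
  have i02 : ∀ x, 0 < p x →
      pr p (Y {0,2}) (Y {0,2} x) = pr p (Y {0}) (Y {0} x) * pr p (Y {2}) (Y {2} x) := by
    intro x hx
    have := gibbs_eq p hp h1 (Y {0}) (Y {2}) (Y ∅) (Y {0,2}) (sub _ _ (by decide))
      (sub _ _ (by decide)) (un _ _ _ (by decide))
      (by rw [e0, e2, e02, c0]; push_cast; ring) x hx
    rw [this, kE, mul_one]
  have i12 : ∀ x, 0 < p x →
      pr p (Y {1,2}) (Y {1,2} x) = pr p (Y {1}) (Y {1} x) * pr p (Y {2}) (Y {2} x) := by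
    intro x hx
    have := gibbs_eq p hp h1 (Y {1}) (Y {2}) (Y ∅) (Y {1,2}) (sub _ _ (by decide))
      (sub _ _ (by decide)) (un _ _ _ (by decide))
      (by rw [e1, e2, e12, c0]; push_cast; ring) x hx
    rw [this, kE, mul_one]
  have i013 : ∀ x, 0 < p x →
      pr p (Y {0,3}) (Y {0,3} x) * pr p (Y {1,3}) (Y {1,3} x)
        = pr p (Y {0,1,3}) (Y {0,1,3} x) * pr p (Y {3}) (Y {3} x) := by
    intro x hx
    exact gibbs_eq p hp h1 (Y {0,3}) (Y {1,3}) (Y {3}) (Y {0,1,3}) (sub _ _ (by decide))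
      (sub _ _ (by decide)) (un _ _ _ (by decide))
      (by rw [e03, e13, e013, e3]; push_cast; ring) x hx
  have s : ∀ A D : Finset (Fin 4), A ⊆ D → ent p (Y D) = ent p (Y A) → ∀ x, 0 < p x →
      pr p (Y D) (Y D x) = pr p (Y A) (Y A x) := fun A D hAD he x hx =>
    same_ent p hp h1 (Y A) (Y D) (sub _ _ hAD) he x hx
  have key : ∀ x, 0 < p x → pr p (Y {2}) (Y {2} x)
      = pr p (Y {0}) (Y {0} x) / pr p (Y {3}) (Y {3} x) := by
    intro x hx
    have q1 := i02 x hx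
    have q2 := i12 x hx
    have q3 := i013 x hx
    rw [s {0} {0,3} (by decide) (by rw [e0, e03]) x hx,
      s {1} {1,3} (by decide) (by rw [e1, e13]) x hx,
      ← s {0,1,3} {0,1,2,3} (by decide) (by rw [e013, eU]) x hx] at q3
    rw [← s {0,2} {0,1,2,3} (by decide) (by rw [e02, eU]) x hx] at q1
    rw [← s {1,2} {0,1,2,3} (by decide) (by rw [e12, eU]) x hx] at q2
    have p0 := pr_pos' p hp (Y {0}) x hx
    have p2 := pr_pos' p hp (Y {2}) x hx
    have p3 := pr_pos' p hp (Y {3}) x hx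
    have q4 : pr p (Y {0}) (Y {0} x) = pr p (Y {1}) (Y {1} x) :=
      mul_right_cancel₀ p2.ne' (q1.symm.trans q2)
    rw [← q4, q1, mul_assoc] at q3
    rw [eq_div_iff p3.ne']
    exact (mul_left_cancel₀ p0.ne' q3).symm
  obtain ⟨x0, hx0⟩ : ∃ x, 0 < p x := by
    by_contra! hc
    have : ∑ x, p x ≤ 0 := Finset.sum_nonpos (fun x _ => hc x)
    linarith
  obtain ⟨k, hk, he⟩ := uniform_ent p hp h1 (Y {2}) (pr p (Y {2}) (Y {2} x0)) (by
    intro y hy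
    obtain ⟨w, hw, w0, w2⟩ := indep_compat p hp h1 (Y {0}) (Y {2}) (Y {0,2})
      (un _ _ _ (by decide)) i02 x0 y hx0 hy
    have w03 := det_of_pr_eq p hp (Y {0}) (Y {0,3}) (sub _ _ (by decide)) x0 w
      (s {0} {0,3} (by decide) (by rw [e0, e03]) x0 hx0) hw w0
    have w3 := sub {3} {0,3} (by decide) _ _ w03
    rw [← w2, key w hw, key x0 hx0, w0, w3])
  refine ⟨k, hk, ?_⟩
  rw [← he, e2]; simp

theorem face_backward (b : ℝ) (hb : 0 ≤ b) (k : ℕ) (hk : 0 < k) :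
    IsEntropic 4
      (fun A => Real.logb 2 k * rkU 2 ({0,1,2} : Finset (Fin 4)) A +
                b * rkU 1 ({0,1,3} : Finset (Fin 4)) A) := by
  obtain ⟨N, q, hq, hq1, hbq⟩ := exists_ent b hb
  have : NeZero k := ⟨hk.ne'⟩
  have hk0 : (k : ℝ) ≠ 0 := by exact_mod_cast hk.ne'
  let X : Fin 4 → (ZMod k × ZMod k × Fin N) → (ZMod k × Option (Fin N)) :=
    ![fun w => (w.1, some w.2.2), fun w => (w.2.1, some w.2.2), fun w => (w.1 + w.2.1, none),
      fun w => (0, some w.2.2)]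
  have hsum : ∀ g : Fin N → ℝ, ∑ w : ZMod k × ZMod k × Fin N, g w.2.2 / (k * k)
      = ∑ z, g z := by
    intro g
    simp only [Fintype.sum_prod_type]
    simp only [Finset.sum_const, Finset.card_univ, ZMod.card, nsmul_eq_mul, ← Finset.sum_div]
    field_simp
  refine entropic_of 4 _ (fun w : ZMod k × ZMod k × Fin N => q w.2.2 / (k * k))
    (fun w => div_nonneg (hq _) (by positivity)) (by rw [hsum, hq1]) X ?_
  -- a uniform computation from the fibre probabilities
  have main : ∀ (A : Finset (Fin 4)) (i j : ℕ), min 2 (A ∩ {0,1,2}).card = i →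
      min 1 (A ∩ {0,1,3}).card = j →
      (∀ w, (∑ w' : ZMod k × ZMod k × Fin N,
        if ∀ i ∈ A, X i w' = X i w then q w'.2.2 / (k * k : ℝ) else 0)
        = q w.2.2 ^ j / (k : ℝ) ^ i) →
      Real.logb 2 k * rkU 2 ({0,1,2} : Finset (Fin 4)) A +
                b * rkU 1 ({0,1,3} : Finset (Fin 4)) A =
      - ∑ w : ZMod k × ZMod k × Fin N, q w.2.2 / (k * k : ℝ) *
        Real.logb 2 (∑ w' : ZMod k × ZMod k × Fin N,
        if ∀ i ∈ A, X i w' = X i w then q w'.2.2 / (k * k : ℝ) else 0) := by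
    intro A i j hi hj hw
    simp only [hw]
    have hi' : rkU 2 ({0,1,2} : Finset (Fin 4)) A = i := by rw [← hi]; simp [rkU]
    have hj' : rkU 1 ({0,1,3} : Finset (Fin 4)) A = j := by rw [← hj]; simp [rkU]
    rw [hi', hj', hbq]
    have := hsum (fun z => q z * Real.logb 2 (q z ^ j / (k : ℝ) ^ i))
    have e : ∀ z, q z * Real.logb 2 (q z ^ j / (k : ℝ) ^ i)
        = j * (q z * Real.logb 2 (q z)) - q z * (i * Real.logb 2 k) := by
      intro z
      rcases (hq z).eq_or_lt with h | h
      · simp [← h]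
      · rw [Real.logb_div (pow_pos h j).ne' (pow_ne_zero _ hk0), Real.logb_pow, Real.logb_pow]
        ring
    simp only [div_mul_eq_mul_div]
    rw [this, Finset.sum_congr rfl (fun z _ => e z), Finset.sum_sub_distrib, ← Finset.mul_sum,
      ← Finset.sum_mul, hq1]
    ring
  have add_iff : ∀ u v u' v' : ZMod k, u' + v' = u + v ↔ v' = u + v - u' := fun u v u' v' =>
    ⟨fun h => by rw [← h]; ring, fun h => by rw [h]; ring⟩
  have s0 : ∀ w : ZMod k × ZMod k × Fin N, (∑ w' : ZMod k × ZMod k × Fin N,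
      if True then q w'.2.2 / (k * k : ℝ) else 0) = q w.2.2 ^ 0 / (k : ℝ) ^ 0 := by
    intro w
    simp only [if_true]
    rw [hsum, hq1]; simp
  have sX2 : ∀ w : ZMod k × ZMod k × Fin N, (∑ w' : ZMod k × ZMod k × Fin N,
      if w'.1 + w'.2.1 = w.1 + w.2.1 then q w'.2.2 / (k * k : ℝ) else 0)
      = q w.2.2 ^ 0 / (k : ℝ) ^ 1 := by
    rintro ⟨u, v, z⟩
    simp only [Fintype.sum_prod_type, add_iff]
    simp [Finset.sum_ite_irrel, ← Finset.sum_div, hq1, ZMod.card]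
    try field_simp
  have sX3 : ∀ w : ZMod k × ZMod k × Fin N, (∑ w' : ZMod k × ZMod k × Fin N,
      if w'.2.2 = w.2.2 then q w'.2.2 / (k * k : ℝ) else 0)
      = q w.2.2 ^ 1 / (k : ℝ) ^ 0 := by
    rintro ⟨u, v, z⟩
    simp only [Fintype.sum_prod_type]
    simp [ZMod.card]
    try field_simp
  have sX0 : ∀ w : ZMod k × ZMod k × Fin N, (∑ w' : ZMod k × ZMod k × Fin N,
      if w'.1 = w.1 ∧ w'.2.2 = w.2.2 then q w'.2.2 / (k * k : ℝ) else 0)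
      = q w.2.2 ^ 1 / (k : ℝ) ^ 1 := by
    rintro ⟨u, v, z⟩
    simp only [Fintype.sum_prod_type, ite_and]
    simp [Finset.sum_ite_irrel, ZMod.card]
    try field_simp
  have sX1 : ∀ w : ZMod k × ZMod k × Fin N, (∑ w' : ZMod k × ZMod k × Fin N,
      if w'.2.1 = w.2.1 ∧ w'.2.2 = w.2.2 then q w'.2.2 / (k * k : ℝ) else 0)
      = q w.2.2 ^ 1 / (k : ℝ) ^ 1 := by
    rintro ⟨u, v, z⟩
    simp only [Fintype.sum_prod_type, ite_and]
    simp [Finset.sum_ite_irrel, ZMod.card]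
    try field_simp
  have sX23 : ∀ w : ZMod k × ZMod k × Fin N, (∑ w' : ZMod k × ZMod k × Fin N,
      if w'.1 + w'.2.1 = w.1 + w.2.1 ∧ w'.2.2 = w.2.2 then q w'.2.2 / (k * k : ℝ) else 0)
      = q w.2.2 ^ 1 / (k : ℝ) ^ 1 := by
    rintro ⟨u, v, z⟩
    simp only [Fintype.sum_prod_type, ite_and, add_iff]
    simp [Finset.sum_ite_irrel, ZMod.card]
    try field_simp
  have sXU : ∀ w : ZMod k × ZMod k × Fin N, (∑ w' : ZMod k × ZMod k × Fin N,
      if w' = w then q w'.2.2 / (k * k : ℝ) else 0)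
      = q w.2.2 ^ 1 / (k : ℝ) ^ 2 := by
    intro w
    simp [pow_two]
  have fin : ∀ (A : Finset (Fin 4)) (i j : ℕ) (P : (ZMod k × ZMod k × Fin N) →
      (ZMod k × ZMod k × Fin N) → Prop) [∀ w w', Decidable (P w w')],
      min 2 (A ∩ {0,1,2}).card = i → min 1 (A ∩ {0,1,3}).card = j →
      (∀ w, (∑ w' : ZMod k × ZMod k × Fin N, if P w' w then q w'.2.2 / (k * k : ℝ) else 0)
        = q w.2.2 ^ j / (k : ℝ) ^ i) →
      (∀ w' w, (∀ i ∈ A, X i w' = X i w) ↔ P w' w) → _ := fun A i j P _ hi hj hs hP =>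
    main A i j hi hj (fun w => (Finset.sum_congr rfl
      (fun w' _ => if_congr (hP w' w) rfl rfl)).trans (hs w))
  have hX0 : ∀ w w', X 0 w = X 0 w' ↔ w.1 = w'.1 ∧ w.2.2 = w'.2.2 := by simp [X]
  have hX1 : ∀ w w', X 1 w = X 1 w' ↔ w.2.1 = w'.2.1 ∧ w.2.2 = w'.2.2 := by simp [X]
  have hX2 : ∀ w w', X 2 w = X 2 w' ↔ w.1 + w.2.1 = w'.1 + w'.2.1 := by simp [X]
  have hX3 : ∀ w w', X 3 w = X 3 w' ↔ w.2.2 = w'.2.2 := by simp [X]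
  have hall : ∀ A : Finset (Fin 4), A = ∅ ∨ A = {2} ∨ A = {3} ∨ (A = {0} ∨ A = {0,3}) ∨
      (A = {1} ∨ A = {1,3}) ∨ A = {2,3} ∨ (({0,1} ⊆ A ∨ {0,2} ⊆ A ∨ {1,2} ⊆ A) ∧
        min 2 (A ∩ {0,1,2}).card = 2 ∧ min 1 (A ∩ {0,1,3}).card = 1) := by decide
  intro A
  rcases hall A with rfl | rfl | rfl | (rfl | rfl) | (rfl | rfl) | rfl | ⟨hA, hi, hj⟩
  · exact fin _ 0 0 (fun _ _ => True) (by decide) (by decide) s0 (by simp)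
  · exact fin _ 1 0 _ (by decide) (by decide) sX2 (by simp [hX2])
  · exact fin _ 0 1 _ (by decide) (by decide) sX3 (by simp [hX3])
  · exact fin _ 1 1 _ (by decide) (by decide) sX0 (by simp [hX0])
  · exact fin _ 1 1 _ (by decide) (by decide) sX0 (by simp [hX0, hX3])
  · exact fin _ 1 1 _ (by decide) (by decide) sX1 (by simp [hX1])
  · exact fin _ 1 1 _ (by decide) (by decide) sX1 (by simp [hX1, hX3])
  · exact fin _ 1 1 _ (by decide) (by decide) sX23 (by simp [hX2, hX3])
  · refine fin A 2 1 _ hi hj sXU (fun w' w => ⟨fun h => ?_, fun h i _ => by rw [h]⟩)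
    have h' : w'.1 = w.1 ∧ w'.2.1 = w.2.1 ∧ w'.2.2 = w.2.2 := by
      rcases hA with hA | hA | hA
      · have a1 := (hX0 _ _).1 (h 0 (hA (by decide)))
        have a2 := (hX1 _ _).1 (h 1 (hA (by decide)))
        exact ⟨a1.1, a2.1, a1.2⟩
      · have a1 := (hX0 _ _).1 (h 0 (hA (by decide)))
        have a2 := (hX2 _ _).1 (h 2 (hA (by decide)))
        rw [a1.1] at a2
        exact ⟨a1.1, add_left_cancel a2, a1.2⟩
      · have a1 := (hX1 _ _).1 (h 1 (hA (by decide)))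
        have a2 := (hX2 _ _).1 (h 2 (hA (by decide)))
        rw [a1.1] at a2
        exact ⟨add_right_cancel a2, a1.1, a1.2⟩
    exact Prod.ext h'.1 (Prod.ext h'.2.1 h'.2.2)

/-- Theorem 4: for the face (U^{123}_{2,3}, U^{124}_{1,3}),
h = a·r₁ + b·r₂ (a, b ≥ 0) is entropic iff a = log₂ k for a positive integer k. -/
theorem face_U123_23_U124_13 (a b : ℝ) (ha : 0 ≤ a) (hb : 0 ≤ b) :
    IsEntropic 4
      (fun A => a * rkU 2 ({0,1,2} : Finset (Fin 4)) A +
                b * rkU 1 ({0,1,3} : Finset (Fin 4)) A)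
    ↔ ∃ k : ℕ, 0 < k ∧ a = Real.logb 2 k := by
  constructor
  · exact face_forward a b
  · rintro ⟨k, hk, rfl⟩
    exact face_backward b hb k hk
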